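/- arXiv:2506.14258 — 5 statements merged into one kernel-verified Lean document; each statement's English description precedes it below -/
import Mathlib

section
/- For every m > 0 there exists a constant γ ≥ 1, depending only on m, such that for all real numbers k > 0 and u ≥ k one has (1/γ)·(k+u)^{1/m−1}·(u−k)² ≤ (1/m)·∫_k^u z^{1/m−1}(z−k) dz ≤ γ·(k+u)^{1/m−1}·(u−k)². -/
theorem aux_lower (a : ℝ) : ∃ A : ℝ, 0 < A ∧ ∀ k u z : ℝ, 0 < k → k ≤ z → z ≤ u →
    A * (k + u) ^ a * (z - (k + (u - k) / 4)) ≤ z ^ a * (z - k) := by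
  rcases le_or_gt 0 a with ha | ha
  · refine ⟨(1 / 4 : ℝ) ^ a, by positivity, ?_⟩
    intro k u z hk hz hu
    have hz0 : 0 < z := by linarith
    have hs : 0 < k + u := by linarith
    rw [← Real.mul_rpow (by norm_num) hs.le]
    have h0 : 0 ≤ z ^ a * (z - k) := mul_nonneg (by positivity) (by linarith)
    have h1 : 0 ≤ (1 / 4 * (k + u)) ^ a := by positivity
    rcases le_or_gt z (k + (u - k) / 4) with h | h
    · have := mul_nonneg h1 (sub_nonneg.2 h)
      linarith
    · apply mul_le_mul _ (by linarith) (by linarith) (by positivity)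
      exact Real.rpow_le_rpow (by positivity) (by linarith) ha
  · refine ⟨1, one_pos, ?_⟩
    intro k u z hk hz hu
    have hz0 : 0 < z := by linarith
    have hs : 0 < k + u := by linarith
    have h1 : 0 ≤ (k + u) ^ a := by positivity
    have h2 : (k + u) ^ a ≤ z ^ a := Real.rpow_le_rpow_of_nonpos hz0 (by linarith) ha.le
    rw [one_mul]
    calc (k + u) ^ a * (z - (k + (u - k) / 4)) ≤ (k + u) ^ a * (z - k) :=
          mul_le_mul_of_nonneg_left (by linarith) h1
      _ ≤ _ := mul_le_mul_of_nonneg_right h2 (by linarith)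

theorem aux_upper (a : ℝ) (ha1 : -1 < a) : ∃ B : ℝ, 0 < B ∧ ∀ k u z : ℝ, 0 < k → k ≤ z → z ≤ u →
    z ^ a * (z - k) ≤ B * (k + u) ^ a * (u - k) := by
  rcases le_or_gt 0 a with ha | ha
  · refine ⟨1, one_pos, ?_⟩
    intro k u z hk hz hu
    have hz0 : 0 < z := by linarith
    have hs : 0 < k + u := by linarith
    rw [one_mul]
    apply mul_le_mul _ (by linarith) (by linarith) (by positivity)
    exact Real.rpow_le_rpow hz0.le (by linarith) ha
  · refine ⟨(1 / 2 : ℝ) ^ a, by positivity, ?_⟩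
    intro k u z hk hz hu
    have hz0 : 0 < z := by linarith
    have hs : 0 < k + u := by linarith
    rw [← Real.mul_rpow (by norm_num) hs.le]
    have h1 : 0 ≤ (1 / 2 * (k + u)) ^ a := by positivity
    rcases hz.eq_or_lt with h | h
    · subst h
      simpa using mul_nonneg h1 (sub_nonneg.2 hu)
    have hd : 0 < u - k := by linarith
    obtain ⟨t, ht⟩ : ∃ t, t = (z - k) / (u - k) := ⟨_, rfl⟩
    have ht0 : 0 < t := by rw [ht]; exact div_pos (by linarith) hd
    have ht1 : t ≤ 1 := by rw [ht, div_le_one hd]; linarith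
    have htd : z - k = t * (u - k) := by rw [ht]; field_simp
    have h2 : z ^ a ≤ (1 / 2 * (k + u) * t) ^ a :=
      Real.rpow_le_rpow_of_nonpos (by positivity) (by nlinarith) ha.le
    rw [Real.mul_rpow (by positivity) ht0.le] at h2
    have h3 : t ^ a * t ≤ 1 := by
      rw [← Real.rpow_add_one ht0.ne']
      exact Real.rpow_le_one ht0.le ht1 (by linarith)
    rw [htd]
    calc z ^ a * (t * (u - k)) ≤ ((1 / 2 * (k + u)) ^ a * t ^ a) * (t * (u - k)) :=
          mul_le_mul_of_nonneg_right h2 (by positivity)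
      _ = ((1 / 2 * (k + u)) ^ a * (u - k)) * (t ^ a * t) := by ring
      _ ≤ ((1 / 2 * (k + u)) ^ a * (u - k)) * 1 :=
          mul_le_mul_of_nonneg_left h3 (by positivity)
      _ = _ := by ring

/-- Lemma 2.1 (upper-level version): for `m > 0` there is `γ ≥ 1` depending only
on `m` such that for all `0 < k ≤ u`,
`(1/γ)(k+u)^(1/m-1)(u-k)² ≤ (1/m)∫_k^u z^(1/m-1)(z-k) dz ≤ γ(k+u)^(1/m-1)(u-k)²`. -/
theorem g_plus_two_sided_bound (m : ℝ) (hm : 0 < m) :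
    ∃ γ : ℝ, 1 ≤ γ ∧ ∀ k u : ℝ, 0 < k → k ≤ u →
      (1 / γ) * (k + u) ^ (1 / m - 1) * (u - k) ^ 2 ≤
          (1 / m) * ∫ z in k..u, z ^ (1 / m - 1) * (z - k) ∧
      (1 / m) * ∫ z in k..u, z ^ (1 / m - 1) * (z - k) ≤
          γ * (k + u) ^ (1 / m - 1) * (u - k) ^ 2 := by
  have ha : -1 < 1 / m - 1 := by
    have : 0 < 1 / m := by positivity
    linarith
  generalize 1 / m - 1 = a at ha ⊢
  obtain ⟨A, hA, hlow⟩ := aux_lower a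
  obtain ⟨B, hB, hup⟩ := aux_upper a ha
  have p1 : 0 < 4 * m / A := by positivity
  have p2 : 0 < B / m := by positivity
  refine ⟨1 + 4 * m / A + B / m, by linarith, ?_⟩
  intro k u hk hu
  have hs : 0 < k + u := by linarith
  have hX : 0 ≤ (k + u) ^ a * (u - k) ^ 2 := by positivity
  have hint : IntervalIntegrable (fun z : ℝ => z ^ a * (z - k)) MeasureTheory.volume k u := by
    apply ContinuousOn.intervalIntegrable
    rw [Set.uIcc_of_le hu]
    apply ContinuousOn.mul _ (by fun_prop)
    intro z hz
    exact (Real.continuousAt_rpow_const z a (Or.inl (by linarith [hz.1]))).continuousWithinAt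
  have hL := intervalIntegral.integral_mono_on hu
    (f := fun z => A * (k + u) ^ a * (z - (k + (u - k) / 4)))
    (Continuous.intervalIntegrable (by fun_prop) _ _) hint
    (fun z hz => hlow k u z hk hz.1 hz.2)
  have hU := intervalIntegral.integral_mono_on hu hint
    (g := fun z => B * (k + u) ^ a * (u - k))
    (Continuous.intervalIntegrable (by fun_prop) _ _)
    (fun z hz => hup k u z hk hz.1 hz.2)
  have e1 : ∫ z in k..u, A * (k + u) ^ a * (z - (k + (u - k) / 4))
      = A / 4 * ((k + u) ^ a * (u - k) ^ 2) := by
    rw [intervalIntegral.integral_const_mul, intervalIntegral.integral_sub (by simp) (by simp),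
      integral_id, intervalIntegral.integral_const, smul_eq_mul]
    ring
  have e2 : ∫ z in k..u, B * (k + u) ^ a * (u - k) = B * ((k + u) ^ a * (u - k) ^ 2) := by
    rw [intervalIntegral.integral_const, smul_eq_mul]
    ring
  rw [e1] at hL
  rw [e2] at hU
  have hm' : 0 ≤ 1 / m := by positivity
  constructor
  · have hg : 1 / (1 + 4 * m / A + B / m) ≤ 1 / m * (A / 4) := by
      calc _ ≤ 1 / (4 * m / A) := one_div_le_one_div_of_le p1 (by linarith)
        _ = _ := by field_simp
    calc _ = 1 / (1 + 4 * m / A + B / m) * ((k + u) ^ a * (u - k) ^ 2) := by ring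
      _ ≤ 1 / m * (A / 4) * ((k + u) ^ a * (u - k) ^ 2) := mul_le_mul_of_nonneg_right hg hX
      _ = 1 / m * (A / 4 * ((k + u) ^ a * (u - k) ^ 2)) := by ring
      _ ≤ _ := mul_le_mul_of_nonneg_left hL hm'
  · calc _ ≤ 1 / m * (B * ((k + u) ^ a * (u - k) ^ 2)) := mul_le_mul_of_nonneg_left hU hm'
      _ = B / m * ((k + u) ^ a * (u - k) ^ 2) := by ring
      _ ≤ (1 + 4 * m / A + B / m) * ((k + u) ^ a * (u - k) ^ 2) :=
          mul_le_mul_of_nonneg_right (by linarith) hX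
      _ = _ := by ring
end

section
/- For every m > 0 there exists a constant γ ≥ 1, depending only on m, such that for all real numbers k > 0 and 0 ≤ u ≤ k one has (1/γ)·(k+u)^{1/m−1}·(k−u)² ≤ (1/m)·∫_u^k z^{1/m−1}(k−z) dz ≤ γ·(k+u)^{1/m−1}·(k−u)². -/
lemma aux_pt (p w t : ℝ) (ht : 0 < t) (h1 : t / 2 ≤ w) (h2 : w ≤ 1) :
    (t / 2) ^ |p| ≤ w ^ p ∧ w ^ p ≤ 1 + (t / 2) ^ p := by
  have hw : 0 < w := by linarith
  constructor
  · exact (Real.rpow_le_rpow (by positivity) h1 (abs_nonneg p)).trans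
      (Real.rpow_le_rpow_of_exponent_ge hw h2 (le_abs_self p))
  · rcases le_total 0 p with hp | hp
    · have := Real.rpow_le_one hw.le h2 hp
      have : 0 ≤ (t / 2) ^ p := by positivity
      linarith
    · have := Real.rpow_le_rpow_of_nonpos (by positivity : 0 < t / 2) h1 hp
      linarith

lemma aux_int (q : ℝ) (hq : -1 < q) :
    IntervalIntegrable (fun t : ℝ => (t / 2) ^ q) MeasureTheory.volume 0 1 := by
  have h : IntervalIntegrable (fun t : ℝ => t ^ q * (1 / 2 : ℝ) ^ q) MeasureTheory.volume 0 1 :=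
    (intervalIntegral.intervalIntegrable_rpow' hq).mul_const _
  refine h.congr ?_
  intro t ht
  rw [Set.uIoc_of_le zero_le_one] at ht
  show t ^ q * (1 / 2 : ℝ) ^ q = (t / 2) ^ q
  rw [← Real.mul_rpow ht.1.le (by norm_num)]
  congr 1; ring

lemma aux_main (p : ℝ) (hp : -1 < p) :
    ∃ A B : ℝ, 0 < A ∧ ∀ k u : ℝ, 0 < k → 0 ≤ u → u ≤ k →
      A * ((k + u) ^ p * (k - u) ^ 2) ≤ ∫ z in u..k, z ^ p * (k - z) ∧
      ∫ z in u..k, z ^ p * (k - z) ≤ B * ((k + u) ^ p * (k - u) ^ 2) := by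
  have hc : ContinuousOn (fun t : ℝ => 1 - t) (Set.uIcc 0 1) := by fun_prop
  have iA : IntervalIntegrable (fun t : ℝ => (t / 2) ^ |p| * (1 - t)) MeasureTheory.volume 0 1 :=
    (aux_int |p| (by linarith [abs_nonneg p])).mul_continuousOn hc
  have iB : IntervalIntegrable (fun t : ℝ => (1 + (t / 2) ^ p) * (1 - t))
      MeasureTheory.volume 0 1 :=
    (intervalIntegrable_const.add (aux_int p hp)).mul_continuousOn hc
  refine ⟨∫ t in (0:ℝ)..1, (t / 2) ^ |p| * (1 - t), ∫ t in (0:ℝ)..1, (1 + (t / 2) ^ p) * (1 - t),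
    ?_, ?_⟩
  · refine intervalIntegral.intervalIntegral_pos_of_pos_on iA ?_ zero_lt_one
    intro t ht
    have := ht.1
    have : 0 < 1 - t := by linarith [ht.2]
    positivity
  intro k u hk hu huk
  have hs : 0 < k + u := by linarith
  set F : ℝ → ℝ := fun t => (((k - u) * t + u) / (k + u)) ^ p * (1 - t) with hF
  have hpt : ∀ t : ℝ, 0 < t → t ≤ 1 →
      (t / 2) ^ |p| * (1 - t) ≤ F t ∧ F t ≤ (1 + (t / 2) ^ p) * (1 - t) := by
    intro t h0 h1
    obtain ⟨ha, hb⟩ := aux_pt p (((k - u) * t + u) / (k + u)) t h0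
      (by rw [le_div_iff₀ hs]; nlinarith [mul_nonneg hu (sub_nonneg.2 h1), mul_nonneg h0.le (sub_nonneg.2 huk)])
      (by rw [div_le_one hs]; nlinarith [mul_nonneg (sub_nonneg.2 huk) (sub_nonneg.2 h1)])
    have : 0 ≤ 1 - t := by linarith
    exact ⟨mul_le_mul_of_nonneg_right ha this, mul_le_mul_of_nonneg_right hb this⟩
  have iF : IntervalIntegrable F MeasureTheory.volume 0 1 := by
    refine iB.mono_fun (by apply Measurable.aestronglyMeasurable; fun_prop) ?_
    rw [Set.uIoc_of_le zero_le_one]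
    refine (MeasureTheory.ae_restrict_iff' measurableSet_Ioc).2 (Filter.Eventually.of_forall ?_)
    intro t ht
    obtain ⟨ha, hb⟩ := hpt t ht.1 ht.2
    have h0 : 0 ≤ (t / 2) ^ |p| * (1 - t) :=
      mul_nonneg (Real.rpow_nonneg (by linarith [ht.1]) _) (by linarith [ht.2])
    beta_reduce
    rw [Real.norm_of_nonneg (h0.trans ha), Real.norm_of_nonneg ((h0.trans ha).trans hb)]
    exact hb
  have key : ∫ z in u..k, z ^ p * (k - z) = (∫ t in (0:ℝ)..1, F t) * ((k + u) ^ p * (k - u) ^ 2) := by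
    have h := intervalIntegral.smul_integral_comp_mul_add (a := 0) (b := 1)
      (fun z : ℝ => z ^ p * (k - z)) (k - u) u
    have e0 : (k - u) * 0 + u = u := by ring
    have e1 : (k - u) * 1 + u = k := by ring
    rw [e0, e1] at h
    rw [← h]
    have h2 : ∫ t in (0:ℝ)..1, ((k - u) * t + u) ^ p * (k - ((k - u) * t + u))
        = ∫ t in (0:ℝ)..1, F t * ((k + u) ^ p * (k - u)) := by
      refine intervalIntegral.integral_congr ?_
      intro t ht
      rw [Set.uIcc_of_le zero_le_one] at ht
      have hn : 0 ≤ (k - u) * t + u := add_nonneg (mul_nonneg (by linarith) ht.1) hu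
      simp only [hF]
      rw [Real.div_rpow hn hs.le]
      have : (k + u) ^ p ≠ 0 := (Real.rpow_pos_of_pos hs p).ne'
      field_simp
      ring
    rw [h2, intervalIntegral.integral_mul_const, smul_eq_mul]
    ring
  have hnn : 0 ≤ (k + u) ^ p * (k - u) ^ 2 := by positivity
  rw [key]
  exact ⟨mul_le_mul_of_nonneg_right (intervalIntegral.integral_mono_on_of_le_Ioo zero_le_one iA iF
      fun t ht => (hpt t ht.1 ht.2.le).1) hnn,
    mul_le_mul_of_nonneg_right (intervalIntegral.integral_mono_on_of_le_Ioo zero_le_one iF iB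
      fun t ht => (hpt t ht.1 ht.2.le).2) hnn⟩

/-- Lemma 2.1 (lower-level version): for `m > 0` there is `γ ≥ 1` depending only
on `m` such that for all `0 ≤ u ≤ k` with `k > 0`,
`(1/γ)(k+u)^(1/m-1)(k-u)² ≤ (1/m)∫_u^k z^(1/m-1)(k-z) dz ≤ γ(k+u)^(1/m-1)(k-u)²`. -/
theorem g_minus_two_sided_bound (m : ℝ) (hm : 0 < m) :
    ∃ γ : ℝ, 1 ≤ γ ∧ ∀ k u : ℝ, 0 < k → 0 ≤ u → u ≤ k →
      (1 / γ) * (k + u) ^ (1 / m - 1) * (k - u) ^ 2 ≤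
          (1 / m) * ∫ z in u..k, z ^ (1 / m - 1) * (k - z) ∧
      (1 / m) * ∫ z in u..k, z ^ (1 / m - 1) * (k - z) ≤
          γ * (k + u) ^ (1 / m - 1) * (k - u) ^ 2 := by
  have hm' : 0 < 1 / m := by positivity
  obtain ⟨A, B, hA, h⟩ := aux_main (1 / m - 1) (by linarith)
  refine ⟨max 1 (max (m / A) (1 / m * B)), le_max_left _ _, ?_⟩
  intro k u hk hu huk
  obtain ⟨h1, h2⟩ := h k u hk hu huk
  have hs : 0 < k + u := by linarith
  have hnn : 0 ≤ (k + u) ^ (1 / m - 1) * (k - u) ^ 2 := by positivity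
  set γ := max 1 (max (m / A) (1 / m * B))
  have g1 : m / A ≤ γ := (le_max_left _ _).trans (le_max_right _ _)
  have g2 : 1 / m * B ≤ γ := (le_max_right _ _).trans (le_max_right _ _)
  have g3 : 1 / γ ≤ 1 / m * A := by
    have := one_div_le_one_div_of_le (by positivity : 0 < m / A) g1
    rwa [one_div_div, div_eq_mul_one_div A m, mul_comm A] at this
  rw [mul_assoc, mul_assoc]
  constructor
  · calc _ ≤ (1 / m * A) * ((k + u) ^ (1 / m - 1) * (k - u) ^ 2) :=
          mul_le_mul_of_nonneg_right g3 hnn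
      _ = 1 / m * (A * ((k + u) ^ (1 / m - 1) * (k - u) ^ 2)) := by ring
      _ ≤ _ := mul_le_mul_of_nonneg_left h1 hm'.le
  · calc _ ≤ 1 / m * (B * ((k + u) ^ (1 / m - 1) * (k - u) ^ 2)) :=
          mul_le_mul_of_nonneg_left h2 hm'.le
      _ = (1 / m * B) * ((k + u) ^ (1 / m - 1) * (k - u) ^ 2) := by ring
      _ ≤ _ := mul_le_mul_of_nonneg_right g2 hnn
end

section
/- Let N ≥ 2, let p_1, …, p_N > 1 and α_1, …, α_N > 0 be real numbers, set α := (1/N)∑_{i=1}^N α_i and define p by 1/p := (1/N)∑_{i=1}^N 1/p_i, and assume p < N. Then there exists a constant c > 0, depending only on N, p_1, …, p_N, α_1, …, α_N, such that for every nonnegative function u : ℝ^N → ℝ with compact support for which each function x ↦ u(x)^{α_i} (i = 1,…,N) is continuously differentiable, one has (∫_{ℝ^N} u^{p̄} dx)^{(N−p)/N} ≤ c·∏_{i=1}^N (∫_{ℝ^N} |∂_i(u^{α_i})| ^{p_i} dx)^{p/(N p_i)}, where p̄ := Nαp/(N−p) and ∂_i denotes the partial derivative in the i-th coordinate direction. 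-/
open MeasureTheory

lemma ast_line {N : ℕ} (w : (Fin N → ℝ) → ℝ) (hw0 : ∀ x, 0 ≤ w x) (hw : ContDiff ℝ 1 w)
    (hc : HasCompactSupport w) (r : ℝ) (hr : 1 ≤ r) (i : Fin N) (x : Fin N → ℝ) :
    ENNReal.ofReal (w x ^ r) ≤ ∫⁻ t, ENNReal.ofReal
      (r * (w (Function.update x i t) ^ (r - 1) *
        |fderiv ℝ w (Function.update x i t) (Pi.single i 1)|)) := by
  have hr0 : r ≠ 0 := by linarith
  have h1 : ContDiff ℝ 1 (fun x => w x ^ r) := by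
    have := hw.rpow_const_of_le (p := r) (m := 1) (by exact_mod_cast hr)
    exact_mod_cast this
  have h2 : HasCompactSupport (fun x => w x ^ r) :=
    hc.comp_left (g := fun y : ℝ => y ^ r) (Real.zero_rpow hr0)
  have h3 : ContDiff ℝ 1 ((fun x => w x ^ r) ∘ Function.update x i) :=
    h1.comp (by convert! contDiff_update 1 x i)
  have h4 : HasCompactSupport ((fun x => w x ^ r) ∘ Function.update x i) :=
    h2.comp_isClosedEmbedding (isClosedEmbedding_update x i)
  have h5 := HasCompactSupport.enorm_le_lintegral_Ici_deriv h3 h4 (x i)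
  have h6 : ‖((fun x => w x ^ r) ∘ Function.update x i) (x i)‖ₑ = ENNReal.ofReal (w x ^ r) := by
    simp only [Function.comp, Function.update_eq_self]
    exact Real.enorm_of_nonneg (Real.rpow_nonneg (hw0 x) r)
  rw [h6] at h5
  refine h5.trans ((setLIntegral_le_lintegral _ _).trans (lintegral_mono fun t => ?_))
  have hd : HasDerivAt ((fun x => w x ^ r) ∘ Function.update x i)
      (((r * w (Function.update x i t) ^ (r - 1)) • fderiv ℝ w (Function.update x i t))
        (Pi.single i 1)) t := by
    refine HasFDerivAt.comp_hasDerivAt t ?_ (hasDerivAt_update x i t)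
    exact ((hw.differentiable one_ne_zero).differentiableAt.hasFDerivAt).rpow_const (Or.inr hr)
  rw [hd.deriv, ← ofReal_norm]
  apply le_of_eq
  congr 1
  have := Real.rpow_nonneg (hw0 (Function.update x i t)) (r-1)
  simp only [FunLike.coe_smul, Pi.smul_apply, smul_eq_mul, Real.norm_eq_abs, abs_mul]
  rw [abs_of_nonneg this, abs_of_nonneg (by linarith : 0 ≤ r)]
  ring

lemma ast_lw {N : ℕ} (hN : 2 ≤ N) (g v : Fin N → (Fin N → ℝ) → ℝ) (B : Fin N → ℝ)
    (hB : ∀ i, 0 < B i) (hg0 : ∀ i x, 0 ≤ g i x) (hgc : ∀ i, Continuous (g i))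
    (hgi : ∀ i, Integrable (g i)) (hgB : ∀ i, ∫ x, g i x ≤ B i) (hv0 : ∀ i x, 0 ≤ v i x)
    (hv : ∀ i x, ENNReal.ofReal (v i x) ≤ ∫⁻ t, ENNReal.ofReal (g i (Function.update x i t))) :
    ∫⁻ x, ENNReal.ofReal (∏ i, v i x ^ (1 / ((N : ℝ) - 1))) ≤
      ENNReal.ofReal ((N : ℝ) ^ ((N : ℝ) / (N - 1)) * ∏ i, B i ^ (1 / ((N : ℝ) - 1))) := by
  have hN' : (2 : ℝ) ≤ N := by exact_mod_cast hN
  have hN1 : (0 : ℝ) < (N : ℝ) - 1 := by linarith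
  have he : 0 ≤ 1 / ((N : ℝ) - 1) := by positivity
  set e := 1 / ((N : ℝ) - 1) with hedef
  let f : (Fin N → ℝ) → ENNReal := fun x => ∑ i, ENNReal.ofReal (g i x / B i)
  have hfm : Measurable f := by
    refine Finset.measurable_sum _ fun i _ => ?_
    exact ((hgc i).measurable.div_const _).ennreal_ofReal
  have hconj : Real.HolderConjugate (Fintype.card (Fin N) : ℝ) ((N : ℝ) / (N - 1)) := by
    rw [Fintype.card_fin]
    exact Real.HolderConjugate.conjExponent (by linarith)
  have key := lintegral_prod_lintegral_pow_le (fun _ : Fin N => (volume : Measure ℝ)) hconj hfm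
  rw [← volume_pi, Fintype.card_fin] at key
  have hf : ∫⁻ x, f x ≤ ENNReal.ofReal N := by
    calc ∫⁻ x, f x = ∑ i, ∫⁻ x, ENNReal.ofReal (g i x / B i) := by
          refine lintegral_finsetSum _ fun i _ => ?_
          exact ((hgc i).measurable.div_const _).ennreal_ofReal
      _ ≤ ∑ i : Fin N, ENNReal.ofReal 1 := by
          refine Finset.sum_le_sum fun i _ => ?_
          rw [← ofReal_integral_eq_lintegral_ofReal ((hgi i).div_const _)
            (Filter.Eventually.of_forall fun x => div_nonneg (hg0 i x) (hB i).le)]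
          apply ENNReal.ofReal_le_ofReal
          rw [integral_div, div_le_one (hB i)]
          exact hgB i
      _ = ENNReal.ofReal N := by simp
  have hpt : ∀ x, ENNReal.ofReal (∏ i, v i x ^ e) ≤ ENNReal.ofReal (∏ i, B i ^ e) *
      ∏ i, (∫⁻ t, f (Function.update x i t)) ^ e := by
    intro x
    rw [ENNReal.ofReal_prod_of_nonneg (fun i _ => Real.rpow_nonneg (hv0 i x) _),
      ENNReal.ofReal_prod_of_nonneg (fun i _ => Real.rpow_nonneg (hB i).le _),
      ← Finset.prod_mul_distrib]
    refine Finset.prod_le_prod' fun i _ => ?_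
    rw [← ENNReal.ofReal_rpow_of_nonneg (hv0 i x) he, ← ENNReal.ofReal_rpow_of_nonneg (hB i).le he,
      ← ENNReal.mul_rpow_of_nonneg _ _ he]
    refine ENNReal.rpow_le_rpow ?_ he
    refine (hv i x).trans ?_
    rw [← lintegral_const_mul' _ _ ENNReal.ofReal_ne_top]
    refine lintegral_mono fun t => ?_
    calc ENNReal.ofReal (g i (Function.update x i t))
        = ENNReal.ofReal (B i) * ENNReal.ofReal (g i (Function.update x i t) / B i) := by
          rw [← ENNReal.ofReal_mul (hB i).le, mul_div_cancel₀ _ (hB i).ne']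
      _ ≤ _ := by
          gcongr
          exact Finset.single_le_sum (f := fun j => ENNReal.ofReal (g j (Function.update x i t) / B j))
            (fun _ _ => zero_le) (Finset.mem_univ i)
  calc _ ≤ ∫⁻ x, ENNReal.ofReal (∏ i, B i ^ e) *
      ∏ i, (∫⁻ t, f (Function.update x i t)) ^ e := lintegral_mono hpt
    _ = ENNReal.ofReal (∏ i, B i ^ e) * ∫⁻ x,
      ∏ i, (∫⁻ t, f (Function.update x i t)) ^ e := lintegral_const_mul' _ _ ENNReal.ofReal_ne_top
    _ ≤ ENNReal.ofReal (∏ i, B i ^ e) * (∫⁻ x, f x) ^ ((N : ℝ) / (N - 1)) := by gcongr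
    _ ≤ ENNReal.ofReal (∏ i, B i ^ e) * (ENNReal.ofReal N) ^ ((N : ℝ) / (N - 1)) := by
      gcongr
    _ = _ := by
      rw [ENNReal.ofReal_rpow_of_nonneg (by positivity) (by positivity), mul_comm,
        ENNReal.ofReal_mul (by positivity)]

theorem anisotropic_sobolev_troisi
    (N : ℕ) (hN : 2 ≤ N)
    (pv a : Fin N → ℝ) (hpv : ∀ i, 1 < pv i) (ha : ∀ i, 0 < a i)
    (p : ℝ) (hp : 1 / p = (1 / (N : ℝ)) * ∑ i, 1 / pv i) (hpN : p < N) :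
    ∃ c : ℝ, 0 < c ∧
      ∀ u : (Fin N → ℝ) → ℝ, (∀ x, 0 ≤ u x) → HasCompactSupport u →
        (∀ i, ContDiff ℝ 1 (fun x => u x ^ a i)) →
        (∫ x, u x ^ ((N : ℝ) * ((1 / (N : ℝ)) * ∑ i, a i) * p / ((N : ℝ) - p))) ^
            (((N : ℝ) - p) / N) ≤
          c * ∏ i,
            (∫ x, |fderiv ℝ (fun y => u y ^ a i) x (Pi.single i 1)| ^ pv i) ^
              (p / ((N : ℝ) * pv i)) := by
  have hN' : (2 : ℝ) ≤ N := by exact_mod_cast hN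
  have hN0 : (0 : ℝ) < (N : ℝ) := by linarith
  have hN1 : (0 : ℝ) < (N : ℝ) - 1 := by linarith
  have hNp : (0 : ℝ) < (N : ℝ) - p := by linarith
  have : Nonempty (Fin N) := ⟨⟨0, by omega⟩⟩
  have hpv0 : ∀ i, 0 < pv i := fun i => by linarith [hpv i]
  have hsum : 0 < ∑ i, 1 / pv i :=
    Finset.sum_pos (fun i _ => one_div_pos.2 (hpv0 i)) Finset.univ_nonempty
  have hp0 : 0 < p := by
    rw [← one_div_pos, hp]; positivity
  have hsum' : ∑ i, 1 / pv i = N / p := by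
    have : (N : ℝ) * (1 / p) = ∑ i, 1 / pv i := by rw [hp]; field_simp
    rw [← this]; ring
  have hsa : 0 < ∑ i, a i := Finset.sum_pos (fun i _ => ha i) Finset.univ_nonempty
  set q : ℝ := (N : ℝ) * ((1 / (N : ℝ)) * ∑ i, a i) * p / ((N : ℝ) - p) with hq
  have hq0 : 0 < q := by positivity
  have hqa : ∑ i, a i = q * ((N - p) / p) := by rw [hq]; field_simp
  let s : Fin N → ℝ := fun i => a i + q * (1 - 1 / pv i)
  have hpv1 : ∀ i, 0 < 1 - 1 / pv i := fun i => by
    have := (div_lt_one (hpv0 i)).2 (hpv i)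
    linarith
  have hsa' : ∀ i, a i ≤ s i := fun i => by
    have := mul_pos hq0 (hpv1 i)
    simp only [s]; linarith
  have hs0 : ∀ i, 0 < s i := fun i => (ha i).trans_le (hsa' i)
  let r : Fin N → ℝ := fun i => s i / a i
  have hr : ∀ i, 1 ≤ r i := fun i => (one_le_div (ha i)).2 (hsa' i)
  have hr0 : ∀ i, 0 < r i := fun i => by linarith [hr i]
  have hss : ∑ i, s i = q * (N - 1) := by
    simp only [s, Finset.sum_add_distrib, ← Finset.mul_sum, Finset.sum_sub_distrib, hsum', hqa]
    simp
    field_simp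
    ring
  set e := 1 / ((N : ℝ) - 1) with he
  have he0 : 0 < e := by positivity
  set K : ℝ := (N : ℝ) ^ ((N : ℝ) / (N - 1)) * ∏ i, r i ^ e with hK
  have hK0 : 0 < K := mul_pos (Real.rpow_pos_of_pos hN0 _)
    (Finset.prod_pos fun i _ => Real.rpow_pos_of_pos (hr0 i) _)
  refine ⟨K ^ ((N - 1) * p / N), Real.rpow_pos_of_pos hK0 _, ?_⟩
  intro u hu0 huc hud
  have hucont : Continuous u := by
    have i : Fin N := Classical.arbitrary _
    have h := (hud i).continuous.rpow_const (p := 1 / a i) (fun x => Or.inr (by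
      have := ha i; positivity))
    refine h.congr fun x => ?_
    rw [← Real.rpow_mul (hu0 x), mul_one_div_cancel (ha i).ne', Real.rpow_one]
  have hpowcont : ∀ β : ℝ, 0 ≤ β → Continuous fun x => u x ^ β := fun β hβ =>
    hucont.rpow_const fun x => Or.inr hβ
  have hpowcs : ∀ β : ℝ, 0 < β → HasCompactSupport fun x => u x ^ β := fun β hβ =>
    huc.comp_left (g := fun y : ℝ => y ^ β) (Real.zero_rpow hβ.ne')
  let D : Fin N → (Fin N → ℝ) → ℝ := fun i x =>
    |fderiv ℝ (fun y => u y ^ a i) x (Pi.single i 1)|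
  have hDcont : ∀ i, Continuous (D i) := fun i =>
    (((hud i).continuous_fderiv one_ne_zero).clm_apply continuous_const).abs
  have hDcs : ∀ i, HasCompactSupport (D i) := fun i =>
    ((hpowcs _ (ha i)).fderiv (𝕜 := ℝ)).comp_left
      (g := fun L : (Fin N → ℝ) →L[ℝ] ℝ => |L (Pi.single i 1)|) (by simp)
  have hD0 : ∀ i x, 0 ≤ D i x := fun i x => abs_nonneg _
  set J := ∫ x, u x ^ q with hJ
  have hJ0 : 0 ≤ J := integral_nonneg fun x => Real.rpow_nonneg (hu0 x) _
  let A : Fin N → ℝ := fun i => ∫ x, D i x ^ pv i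
  have hA0 : ∀ i, 0 ≤ A i := fun i => integral_nonneg fun x => Real.rpow_nonneg (hD0 i x) _
  change J ^ ((N - p) / N) ≤ K ^ ((N - 1) * p / N) * ∏ i, A i ^ (p / (N * pv i))
  let H : Fin N → ℝ := fun i => r i * (J ^ (1 - 1 / pv i) * A i ^ (1 / pv i))
  have hH0 : ∀ i, 0 ≤ H i := fun i => mul_nonneg (hr0 i).le
    (mul_nonneg (Real.rpow_nonneg hJ0 _) (Real.rpow_nonneg (hA0 i) _))
  let h : Fin N → (Fin N → ℝ) → ℝ := fun i x => u x ^ (q * (1 - 1 / pv i))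
  have hh0 : ∀ i x, 0 ≤ h i x := fun i x => Real.rpow_nonneg (hu0 x) _
  have hhc : ∀ i, Continuous (h i) := fun i => hpowcont _ (mul_pos hq0 (hpv1 i)).le
  have hhcs : ∀ i, HasCompactSupport (h i) := fun i => hpowcs _ (mul_pos hq0 (hpv1 i))
  let g : Fin N → (Fin N → ℝ) → ℝ := fun i x => r i * (h i x * D i x)
  have hgc : ∀ i, Continuous (g i) := fun i => continuous_const.mul ((hhc i).mul (hDcont i))
  have hgcs : ∀ i, HasCompactSupport (g i) := fun i => ((hhcs i).mul_right (f' := D i)).mul_left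
  have hg0 : ∀ i x, 0 ≤ g i x := fun i x =>
    mul_nonneg (hr0 i).le (mul_nonneg (hh0 i x) (hD0 i x))
  have hgi : ∀ i, Integrable (g i) := fun i => (hgc i).integrable_of_hasCompactSupport (hgcs i)
  have hgH : ∀ i, ∫ x, g i x ≤ H i := by
    intro i
    have hc : Real.HolderConjugate (Real.conjExponent (pv i)) (pv i) :=
      (Real.HolderConjugate.conjExponent (hpv i)).symm
    have hce : 1 / Real.conjExponent (pv i) = 1 - 1 / pv i := by
      have := hc.inv_add_inv_eq_one
      simp only [one_div]; linarith
    have hol := integral_mul_le_Lp_mul_Lq_of_nonneg (μ := volume) hc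
      (Filter.Eventually.of_forall (hh0 i)) (Filter.Eventually.of_forall (hD0 i))
      ((hhc i).memLp_of_hasCompactSupport (hhcs i))
      ((hDcont i).memLp_of_hasCompactSupport (hDcs i))
    have hhJ : ∀ x, h i x ^ Real.conjExponent (pv i) = u x ^ q := by
      intro x
      simp only [h]
      rw [← Real.rpow_mul (hu0 x), ← hce, mul_assoc, one_div_mul_cancel hc.pos.ne', mul_one]
    simp only [hhJ] at hol
    rw [hce] at hol
    simp only [g, H]
    rw [integral_const_mul]
    exact mul_le_mul_of_nonneg_left hol (hr0 i).le
  have hr1 : ∀ i, a i * (r i - 1) = q * (1 - 1 / pv i) := by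
    intro i
    have := (ha i).ne'
    simp only [r, s]; field_simp; ring
  have har : ∀ i, a i * r i = s i := fun i => mul_div_cancel₀ _ (ha i).ne'
  have hline : ∀ i x, ENNReal.ofReal (u x ^ s i) ≤
      ∫⁻ t, ENNReal.ofReal (g i (Function.update x i t)) := by
    intro i x
    have := ast_line (fun x => u x ^ a i) (fun x => Real.rpow_nonneg (hu0 x) _) (hud i)
      (hpowcs _ (ha i)) (r i) (hr i) i x
    simpa only [← Real.rpow_mul (hu0 _), har, hr1] using this
  have hprod : ∀ x, ∏ i, (u x ^ s i) ^ e = u x ^ q := by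
    intro x
    simp only [← Real.rpow_mul (hu0 x)]
    rw [← Real.rpow_sum_of_nonneg (hu0 x) (fun i _ => (mul_pos (hs0 i) he0).le),
      ← Finset.sum_mul, hss, he]
    congr 1
    field_simp
  have hJi : Integrable fun x => u x ^ q :=
    (hpowcont q hq0.le).integrable_of_hasCompactSupport (hpowcs q hq0)
  have heps : ∀ ε : ℝ, 0 < ε → J ≤ (N : ℝ) ^ ((N : ℝ) / (N - 1)) * ∏ i, (H i + ε) ^ e := by
    intro ε hε
    have hB : ∀ i, 0 < H i + ε := fun i => by linarith [hH0 i]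
    have := ast_lw hN g (fun i x => u x ^ s i) (fun i => H i + ε) hB hg0 hgc hgi
      (fun i => by linarith [hgH i]) (fun i x => Real.rpow_nonneg (hu0 x) _) hline
    simp only [← he, hprod] at this
    rw [← ofReal_integral_eq_lintegral_ofReal hJi
      (Filter.Eventually.of_forall fun x => Real.rpow_nonneg (hu0 x) _)] at this
    refine (ENNReal.ofReal_le_ofReal_iff ?_).1 this
    exact mul_nonneg (by positivity) (Finset.prod_nonneg fun i _ => Real.rpow_nonneg (hB i).le _)
  have hlim : J ≤ (N : ℝ) ^ ((N : ℝ) / (N - 1)) * ∏ i, (H i) ^ e := by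
    have hcont : Continuous fun ε : ℝ => (N : ℝ) ^ ((N : ℝ) / (N - 1)) * ∏ i, (H i + ε) ^ e :=
      continuous_const.mul (continuous_finsetProd _ fun i _ =>
        (continuous_const.add continuous_id).rpow_const fun _ => Or.inr he0.le)
    have ht := (hcont.tendsto 0).mono_left (nhdsWithin_le_nhds (s := Set.Ioi 0))
    simp only [add_zero] at ht
    exact ge_of_tendsto ht (by
      filter_upwards [self_mem_nhdsWithin] with ε hε using heps ε hε)
  rcases hJ0.eq_or_lt with hJz | hJpos
  · rw [← hJz, Real.zero_rpow (by positivity)]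
    exact mul_nonneg (Real.rpow_nonneg hK0.le _)
      (Finset.prod_nonneg fun i _ => Real.rpow_nonneg (hA0 i) _)
  have hsplit : ∏ i, (H i) ^ e = (∏ i, r i ^ e) * (J ^ ((N - N / p) * e) *
      ∏ i, A i ^ (1 / pv i * e)) := by
    have h1 : ∀ i, (H i) ^ e = r i ^ e * (J ^ ((1 - 1 / pv i) * e) * A i ^ (1 / pv i * e)) := by
      intro i
      simp only [H]
      rw [Real.mul_rpow (hr0 i).le (mul_nonneg (Real.rpow_nonneg hJ0 _) (Real.rpow_nonneg (hA0 i) _)),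
        Real.mul_rpow (Real.rpow_nonneg hJ0 _) (Real.rpow_nonneg (hA0 i) _),
        ← Real.rpow_mul hJ0, ← Real.rpow_mul (hA0 i)]
    simp only [h1, Finset.prod_mul_distrib]
    rw [← Real.rpow_sum_of_pos hJpos, ← Finset.sum_mul, Finset.sum_sub_distrib, hsum']
    simp
  set P := ∏ i, A i ^ (1 / pv i * e) with hP
  have hP0 : 0 ≤ P := Finset.prod_nonneg fun i _ => Real.rpow_nonneg (hA0 i) _
  have hfin : J ^ (1 - (N - N / p) * e) ≤ K * P := by
    rw [Real.rpow_sub hJpos, Real.rpow_one, div_le_iff₀ (Real.rpow_pos_of_pos hJpos _)]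
    calc J ≤ _ := hlim
      _ = _ := by rw [hsplit, hK]; ring
  have hθ : 0 < (N - 1) * p / N := by positivity
  have h2 := Real.rpow_le_rpow (Real.rpow_nonneg hJ0 _) hfin hθ.le
  rw [← Real.rpow_mul hJ0, Real.mul_rpow hK0.le hP0, hP,
    ← Real.finsetProd_rpow _ _ (fun i _ => Real.rpow_nonneg (hA0 i) _)] at h2
  have hexp : (1 - (N - N / p) * e) * ((N - 1) * p / N) = (N - p) / N := by
    rw [he]; field_simp; ring
  rw [hexp] at h2
  refine h2.trans_eq ?_
  congr 1
  refine Finset.prod_congr rfl fun i _ => ?_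
  rw [← Real.rpow_mul (hA0 i)]
  congr 1
  have := (hpv0 i).ne'
  rw [he]; field_simp
end

section
/- For every m > 0 there exist constants γ ≥ 1 and c > 0, depending only on m, such that for every k > 0, every natural number j, and every real u ≥ 0 with u^m ≥ k_{j+1}^m, one has g₊(u^m, (k'_j)^m) := (1/m)∫_{(k'_j)^m}^{u^m} z^{1/m−1}(z − (k'_j)^m) dz ≥ γ^{-1}·2^{-cj}·(u^m − k_{j+1}^m)^{1+1/m}. -/
theorem g_aux (s a b : ℝ) (hs : 0 < s) (ha : 0 < a) (hab : a < b) :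
    (b - a) ^ (s + 2) / (s + 2) / b ≤ ∫ z in a..b, z ^ (s - 1) * (z - a) := by
  have hb : 0 < b := ha.trans hab
  have h1 : ∫ z in a..b, (z - a) ^ (s + 1) / b = (b - a) ^ (s + 2) / (s + 2) / b := by
    rw [intervalIntegral.integral_div, intervalIntegral.integral_comp_sub_right (fun z => z ^ (s + 1)),
      integral_rpow (Or.inl (by linarith)), sub_self, Real.zero_rpow (by linarith)]
    ring_nf
  rw [← h1]
  apply intervalIntegral.integral_mono_on hab.le
  · apply ContinuousOn.intervalIntegrable
    apply ContinuousOn.div_const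
    exact ContinuousOn.rpow_const (by fun_prop) (fun x _ => Or.inr (by linarith))
  · apply ContinuousOn.intervalIntegrable
    apply ContinuousOn.mul _ (by fun_prop)
    refine ContinuousOn.rpow_const (by fun_prop) (fun x hx => Or.inl ?_)
    rw [Set.uIcc_of_le hab.le] at hx
    linarith [hx.1]
  · intro z hz
    have hz0 : 0 < z := ha.trans_le hz.1
    have hza : 0 ≤ z - a := sub_nonneg.2 hz.1
    rw [Real.rpow_add_one' hza (by linarith), Real.rpow_sub_one hz0.ne', mul_div_right_comm]
    apply mul_le_mul_of_nonneg_right _ hza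
    apply div_le_div₀ (by positivity) _ hz0 hz.2
    exact Real.rpow_le_rpow hza (by linarith) hs.le

/-- Estimate (3.1): for `m > 0` there exist `γ ≥ 1` and `c > 0` depending only
on `m` such that for every `k > 0`, `j ∈ ℕ` and `u ≥ 0` with `u^m ≥ k_{j+1}^m`,
`g₊(u^m, (k'_j)^m) = (1/m)∫_{(k'_j)^m}^{u^m} z^(1/m-1)(z-(k'_j)^m) dz
  ≥ γ⁻¹ 2^(-cj) (u^m - k_{j+1}^m)^(1+1/m)`. -/
theorem g_plus_lower_bound_levels (m : ℝ) (hm : 0 < m) :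
    ∃ γ c : ℝ, 1 ≤ γ ∧ 0 < c ∧
      ∀ k : ℝ, 0 < k → ∀ j : ℕ, ∀ u : ℝ, 0 ≤ u →
      ∀ kjm kj1m kbm kpm : ℝ,
        kjm = k ^ m - k ^ m / 2 ^ (j + 1) →
        kj1m = k ^ m - k ^ m / 2 ^ (j + 2) →
        kbm = (kjm + kj1m) / 2 →
        kpm = (kbm + kj1m) / 2 →
        kj1m ≤ u ^ m →
        γ⁻¹ * (2 : ℝ) ^ (-(c * (j : ℝ))) * (u ^ m - kj1m) ^ (1 + 1 / m) ≤
          (1 / m) * ∫ z in kpm..(u ^ m), z ^ (1 / m - 1) * (z - kpm) := by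
  refine ⟨17 * (1 + 2 * m), 1, by linarith, one_pos, ?_⟩
  intro k hk j u hu kjm kj1m kbm kpm h1 h2 h3 h4 h5
  have hK : 0 < k ^ m := Real.rpow_pos_of_pos hk m
  generalize k ^ m = K at *
  generalize u ^ m = b at *
  have hP : (1 : ℝ) ≤ 2 ^ j := one_le_pow₀ (by norm_num)
  rw [one_mul, Real.rpow_neg (by norm_num), Real.rpow_natCast]
  have e1 : K / 2 ^ (j + 1) = (K / 2 ^ j) / 2 := by rw [pow_succ]; field_simp
  have e2 : K / 2 ^ (j + 2) = (K / 2 ^ j) / 4 := by rw [pow_add]; field_simp; norm_num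
  rw [e1] at h1
  rw [e2] at h2
  have hQ : K / 2 ^ j * 2 ^ j = K := by field_simp
  have hQ0 : 0 < K / 2 ^ j := by positivity
  have hQK : K / 2 ^ j ≤ K := div_le_self hK.le hP
  generalize K / 2 ^ j = Q at *
  generalize (2 : ℝ) ^ j = P at *
  have ha : 0 < kpm := by linarith
  have hd : kj1m = kpm + Q / 16 := by linarith
  have hab : kpm < b := by linarith
  have hb0 : 0 < b := by linarith
  have hs : 0 < 1 / m := by positivity
  have ht : 0 < b - kpm := by linarith
  have htQ : Q / 16 ≤ b - kpm := by linarith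
  have hbP : b ≤ 17 * P * (b - kpm) := by
    have : Q / 16 * P ≤ (b - kpm) * P := by gcongr
    nlinarith
  have key := g_aux (1 / m) kpm b hs ha hab
  refine le_trans ?_ (mul_le_mul_of_nonneg_left key hs.le)
  have hle : (b - kj1m) ^ (1 + 1 / m) ≤ (b - kpm) ^ (1 + 1 / m) :=
    Real.rpow_le_rpow (by linarith) (by linarith) (by linarith)
  have hsp : (b - kpm) ^ (1 / m + 2) = (b - kpm) ^ (1 + 1 / m) * (b - kpm) := by
    rw [← Real.rpow_add_one ht.ne']; ring_nf
  rw [hsp]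
  have hT : 0 < (b - kpm) ^ (1 + 1 / m) := Real.rpow_pos_of_pos ht _
  generalize (b - kpm) ^ (1 + 1 / m) = T at *
  have hP0 : 0 < P := by linarith
  calc (17 * (1 + 2 * m))⁻¹ * P⁻¹ * (b - kj1m) ^ (1 + 1 / m)
      ≤ (17 * (1 + 2 * m))⁻¹ * P⁻¹ * T := by gcongr
    _ = 1 / m * (T * (b - kpm) / (1 / m + 2) / (17 * P * (b - kpm))) := by
        field_simp
    _ ≤ _ := by gcongr
end

section
/- For every m > 0 there exist constants γ ≥ 1 and c > 0, depending only on m, such that for every k > 0, every natural number j, and every real u ≥ 0, one has g₊(u^m, (k'_j)^m) := (1/m)∫_{(k'_j)^m}^{u^m} z^{1/m−1}(z − (k'_j)^m)₊ dz ≤ γ·2^{cj}·((u^m − k̄_j^m)₊)^{1+1/m}, where t₊ := max(t,0) and the integral is taken to be 0 when u^m ≤ (k'_j)^m. -/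
/-- Estimate (3.2): for `m > 0` there exist `γ ≥ 1` and `c > 0` depending only
on `m` such that for every `k > 0`, `j ∈ ℕ` and `u ≥ 0`,
`g₊(u^m, (k'_j)^m) = (1/m)∫_{(k'_j)^m}^{u^m} z^(1/m-1)(z-(k'_j)^m)₊ dz
  ≤ γ 2^(cj) ((u^m - k̄_j^m)₊)^(1+1/m)`
(the integral being `0` when `u^m ≤ (k'_j)^m`). -/
theorem g_plus_upper_bound_levels (m : ℝ) (hm : 0 < m) :
    ∃ γ c : ℝ, 1 ≤ γ ∧ 0 < c ∧
      ∀ k : ℝ, 0 < k → ∀ j : ℕ, ∀ u : ℝ, 0 ≤ u →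
      ∀ kjm kj1m kbm kpm : ℝ,
        kjm = k ^ m - k ^ m / 2 ^ (j + 1) →
        kj1m = k ^ m - k ^ m / 2 ^ (j + 2) →
        kbm = (kjm + kj1m) / 2 →
        kpm = (kbm + kj1m) / 2 →
        (1 / m) * ∫ z in kpm..(u ^ m), z ^ (1 / m - 1) * max (z - kpm) 0 ≤
          γ * (2 : ℝ) ^ (c * (j : ℝ)) * (max (u ^ m - kbm) 0) ^ (1 + 1 / m) := by
  have hm' : 0 < 1 / m := by positivity
  refine ⟨17 ^ (1 / m), 1 / m, Real.one_le_rpow (by norm_num) hm'.le, hm', ?_⟩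
  intro k hk j u hu kjm kj1m kbm kpm h1 h2 h3 h4
  have hK : 0 < k ^ m := Real.rpow_pos_of_pos hk m
  have hU0 : 0 ≤ u ^ m := Real.rpow_nonneg hu m
  generalize k ^ m = K at *
  generalize u ^ m = U at *
  have hP1 : (1 : ℝ) ≤ 2 ^ j := one_le_pow₀ (by norm_num)
  have hPr : (2 : ℝ) ^ (1 / m * (j : ℝ)) = ((2 : ℝ) ^ j) ^ (1 / m) := by
    rw [mul_comm, Real.rpow_mul (by norm_num), Real.rpow_natCast]
  rw [hPr]
  rw [pow_add] at h1 h2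
  generalize (2 : ℝ) ^ j = P at *
  have hP : 0 < P := by linarith
  obtain ⟨t, ht⟩ : ∃ t, t = K / P := ⟨_, rfl⟩
  have hKt : K = t * P := by rw [ht]; field_simp
  have ht0 : 0 < t := by rw [ht]; positivity
  have htK : t ≤ K := by rw [hKt]; nlinarith
  have e1 : K / (P * 2 ^ 1) = t / 2 := by rw [ht]; field_simp
  have e2 : K / (P * 2 ^ 2) = t / 4 := by rw [ht]; field_simp; norm_num
  rw [e1] at h1
  rw [e2] at h2
  have hkb : kbm = K - 3 * t / 8 := by rw [h3, h1, h2]; ring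
  have hkp : kpm = K - 5 * t / 16 := by rw [h4, hkb, h2]; ring
  have hkp0 : 0 < kpm := by linarith
  rcases le_total U kpm with hle | hle
  · have h0 : ∫ z in kpm..U, z ^ (1 / m - 1) * max (z - kpm) 0 = 0 := by
      rw [← intervalIntegral.integral_zero (a := kpm) (b := U) (μ := MeasureTheory.volume)]
      apply intervalIntegral.integral_congr
      intro z hz
      rw [Set.uIcc_of_ge hle] at hz
      have : max (z - kpm) 0 = 0 := max_eq_right (by linarith [hz.2])
      simp [this]
    rw [h0, mul_zero]
    positivity
  · obtain ⟨w, hw⟩ : ∃ w, w = U - kbm := ⟨_, rfl⟩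
    have hwt : t / 16 ≤ w := by linarith
    have hw0 : 0 < w := by linarith
    have hUw : U ≤ 17 * P * w := by nlinarith
    rw [← hw, max_eq_left hw0.le]
    have hI : ∫ z in kpm..U, z ^ (1 / m - 1) * max (z - kpm) 0
        ≤ ∫ z in kpm..U, z ^ (1 / m - 1) * w := by
      have hc : ContinuousOn (fun z : ℝ => z ^ (1 / m - 1)) (Set.uIcc kpm U) := by
        intro z hz
        rw [Set.uIcc_of_le hle] at hz
        exact (Real.continuousAt_rpow_const _ _
          (Or.inl (by linarith [hz.1] : (0 : ℝ) < z).ne')).continuousWithinAt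
      apply intervalIntegral.integral_mono_on hle
      · exact (hc.mul (by fun_prop)).intervalIntegrable
      · exact (hc.mul (by fun_prop)).intervalIntegrable
      · intro z hz
        have : 0 ≤ z := by linarith [hz.1]
        apply mul_le_mul_of_nonneg_left _ (Real.rpow_nonneg this _)
        exact max_le (by linarith [hz.2]) hw0.le
    rw [intervalIntegral.integral_mul_const, integral_rpow (Or.inl (by linarith)),
      sub_add_cancel] at hI
    have hpp : 0 ≤ kpm ^ (1 / m) := Real.rpow_nonneg hkp0.le _
    calc _ ≤ 1 / m * ((U ^ (1 / m) - kpm ^ (1 / m)) / (1 / m) * w) :=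
          mul_le_mul_of_nonneg_left hI hm'.le
      _ = (U ^ (1 / m) - kpm ^ (1 / m)) * w := by
          generalize U ^ (1 / m) - kpm ^ (1 / m) = X
          field_simp
      _ ≤ (17 * P * w) ^ (1 / m) * w := by
          apply mul_le_mul_of_nonneg_right _ hw0.le
          linarith [Real.rpow_le_rpow hU0 hUw hm'.le]
      _ = _ := by
          rw [Real.mul_rpow (by positivity) hw0.le, Real.mul_rpow (by norm_num) hP.le,
            Real.rpow_add hw0, Real.rpow_one]
          ring
end
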